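/- arXiv:2202.09393 — 6 statements merged into one kernel-verified Lean document; each statement's English description precedes it below -/
import Mathlib

section
/- Let Ω = ℕ_{≥1} and let P be a probability measure on Ω that is ordered non-increasingly, i.e. P(n+1) ≤ P(n) for all n ≥ 1. Then the Shannon entropy H(P) is infinite if and only if the series ∑_{n≥1} P(n)·ln(n) diverges to infinity. -/
/-!
The two series are compared term by term, with `p = P n`.

* Monotonicity gives `n * p ≤ P 1 + ⋯ + P n ≤ 1`, so `log n ≤ -log p` and
  `p * log n ≤ -p * log p`.
* Without monotonicity, `-p * log p ≤ 2 * p * log n + 1 / n ^ 2`, by the pointwise Gibbs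
  inequality `p * log (q / p) ≤ q - p` with the summable weight `q = 1 / n ^ 2`.
-/

open scoped ENNReal

noncomputable section

/-- `P` is a probability mass function on `Ω`. -/
def IsPMF {Ω : Type*} (P : Ω → ℝ) : Prop :=
  (∀ ω, 0 ≤ P ω) ∧ HasSum P 1

/-- Shannon entropy `H(P) = −∑ P(ω)·ln P(ω)` of a probability mass function,
valued in `[0,∞]` (convention `0·ln 0 = 0`, which holds since `Real.log 0 = 0`). -/
def shEntropy {Ω : Type*} (P : Ω → ℝ) : ℝ≥0∞ :=
  ∑' ω, ENNReal.ofReal (-(P ω * Real.log (P ω)))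

/-- Since `P` is non-increasing, `n * P n` is at most the mass of `{1, …, n}`. -/
lemma natCast_mul_le_one {P : ℕ+ → ℝ} (hP : IsPMF P) (hmono : ∀ n : ℕ+, P (n + 1) ≤ P n)
    (n : ℕ+) : ((n : ℕ) : ℝ) * P n ≤ 1 := by
  have hanti : ∀ k m : ℕ+, k ≤ m → P m ≤ P k := by
    intro k m
    induction m using PNat.recOn with
    | one => intro h; rw [le_antisymm h (one_le (a := k))]
    | succ m ih =>
      intro h
      rcases h.eq_or_lt with rfl | h
      · exact le_rfl
      · exact (hmono m).trans (ih (PNat.lt_add_one_iff.mp h))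
  calc ((n : ℕ) : ℝ) * P n = ∑ _k ∈ Finset.Icc 1 n, P n := by simp
    _ ≤ ∑ k ∈ Finset.Icc 1 n, P k :=
      Finset.sum_le_sum fun k hk => hanti k n (Finset.mem_Icc.mp hk).2
    _ ≤ 1 := sum_le_hasSum _ (fun k _ => hP.1 k) hP.2

lemma mul_log_le_neg_mul_log {p x : ℝ} (hp : 0 ≤ p) (hx : 0 < x) (h : x * p ≤ 1) :
    p * Real.log x ≤ -(p * Real.log p) := by
  rcases hp.eq_or_lt with rfl | hp'
  · simp
  · have h1 := Real.log_nonpos (by positivity) h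
    rw [Real.log_mul hx.ne' hp'.ne'] at h1
    nlinarith

/-- Gibbs' inequality for a single term: compare `p` with the weight `q = 1 / x ^ 2` through
`log (q / p) ≤ q / p - 1`. -/
lemma neg_mul_log_le {p x : ℝ} (hp : 0 ≤ p) (hx : 0 < x) :
    -(p * Real.log p) ≤ 2 * (p * Real.log x) + 1 / x ^ 2 := by
  rcases hp.eq_or_lt with rfl | hp'
  · simp [sq_nonneg]
  · have h1 := Real.log_le_sub_one_of_pos (show 0 < 1 / x ^ 2 / p by positivity)
    rw [Real.log_div (by positivity) hp'.ne', Real.log_div one_ne_zero (by positivity),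
      Real.log_one, Real.log_pow] at h1
    have h2 := mul_le_mul_of_nonneg_left h1 hp
    have h3 : p * (1 / x ^ 2 / p - 1) = 1 / x ^ 2 - p := by field_simp
    rw [h3] at h2
    push_cast at h2
    linarith

/-- For a non-increasing probability measure on `ℕ_{≥1}`, the Shannon entropy is
infinite iff `∑_{n ≥ 1} P(n)·ln n` diverges to infinity. -/
theorem stmt0 (P : ℕ+ → ℝ) (hP : IsPMF P)
    (hmono : ∀ n : ℕ+, P (n + 1) ≤ P n) :
    shEntropy P = ⊤ ↔
      (∑' n : ℕ+, ENNReal.ofReal (P n * Real.log ((n : ℕ) : ℝ))) = ⊤ := by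
  have hpos : ∀ n : ℕ+, (0 : ℝ) < ((n : ℕ) : ℝ) := fun n => Nat.cast_pos.mpr n.pos
  constructor
  · contrapose
    intro hfin
    have hsq : (∑' n : ℕ+, ENNReal.ofReal (1 / ((n : ℕ) : ℝ) ^ 2)) ≠ ⊤ :=
      ((Real.summable_one_div_nat_pow.mpr one_lt_two).comp_injective
        PNat.coe_injective).tsum_ofReal_ne_top
    have hle : shEntropy P ≤ 2 * (∑' n : ℕ+, ENNReal.ofReal (P n * Real.log ((n : ℕ) : ℝ))) +
        ∑' n : ℕ+, ENNReal.ofReal (1 / ((n : ℕ) : ℝ) ^ 2) := by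
      rw [← ENNReal.tsum_mul_left, ← ENNReal.tsum_add]
      refine ENNReal.tsum_le_tsum fun n => ?_
      refine (ENNReal.ofReal_le_ofReal (neg_mul_log_le (hP.1 n) (hpos n))).trans ?_
      refine ENNReal.ofReal_add_le.trans ?_
      rw [ENNReal.ofReal_mul zero_le_two, ENNReal.ofReal_ofNat]
    exact ne_top_of_le_ne_top
      (ENNReal.add_ne_top.mpr ⟨ENNReal.mul_ne_top ENNReal.ofNat_ne_top hfin, hsq⟩) hle
  · intro h
    rw [eq_top_iff, ← h]
    exact ENNReal.tsum_le_tsum fun n => ENNReal.ofReal_le_ofReal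
      (mul_log_le_neg_mul_log (hP.1 n) (hpos n) (natCast_mul_le_one hP hmono n))
end
end

section
/- Let n ≥ 0 and X₁,…,X_n be discrete random variables on a countable discrete sample space Ω, and for L ⊆ [n] let X_L denote the joint random variable ∏_{i∈L} X_i. Then there exists an information measure μ : 2^{X̃} → (conditionable functions Δ_f(Ω) → ℝ), i.e. a map satisfying μ(A₁ ∪ A₂) = μ(A₁) + μ(A₂) for disjoint A₁, A₂ ⊆ X̃, such that for all q ≥ 1 and all J, L₁,…,L_q ⊆ [n]: X_J.I_q(X_{L₁};…;X_{L_q}) = μ(⋂_{k=1}^q X̃_{L_k} \ X̃_J). Concretely, μ can be taken as the unique such measure with μ({p_I}) = ∑_{∅≠K⊇I^c} (−1)^{|K|+|I|+1−n}·I₁(X_K) for every nonempty I ⊆ [n], where I^c = [n]∖I. -/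
/-!
The interaction information of joint variables is governed by two facts.

*Analysis.* For `P` of finite entropy, every law and every conditional measure of `P` has finite
entropy again (`IsPMF.shEntropy_law_le`, `IsPMF.shEntropy_cond_lt_top`), and the chain rule
`A.H(B) = H(A,B) - H(A)` holds with a summable left-hand side (`hasSum_cond_entropy`). Hence
entropy functions, and their finite linear combinations, are conditionable, and
`X_J.I₁(X_K) = I₁(X_{J ∪ K}) - I₁(X_J)` (`hasSum_cond_joint`).

*Combinatorics.* The matrix `moebCoeff` of the signs in the formula for `μ(p_I)` is inverse to the
incidence matrix `circleInc` between the sets `X̃_K` and the atoms (`moebCoeff_mul_circleInc`).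
Reading this as `circleInc * moebCoeff = 1`, the additive `μ` prescribed on atoms by the formula
satisfies `μ(X̃_K) = I₁(X_K)` (`infoMeasure_circlesOf`). Together with the chain rule and
`moebCoeff * circleInc = 1` this yields `X_J.μ(A) = μ(A \ X̃_J)`, first for atoms
(`hasSum_cond_atomVal`), then for all `A` by linearity (`acondRV_infoMeasure`).

Induction on `q`, with `μ(S) - μ(S \ X̃_L) = μ(S ∩ X̃_L)` in the inductive step, then gives
`I_q(X_{L₁};…;X_{L_q}) = μ(⋂ X̃_{L_k})` (`Iq_eq_infoMeasure`), and conditioning once more on `X_J`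
removes `X̃_J`.
-/

open scoped ENNReal Classical

noncomputable section

universe u

/-- The law (push-forward) `P_X(x) = P(X⁻¹(x))` of `X` under `P`. -/
def rvLaw {Ω E : Type*} (X : Ω → E) (P : Ω → ℝ) : E → ℝ :=
  fun x => ∑' ω, if X ω = x then P ω else 0

/-- The conditional probability measure `P|_{X=x}`, defined as `P` itself when
`P_X(x) = 0`. -/
def pmfCond {Ω E : Type*} (X : Ω → E) (x : E) (P : Ω → ℝ) : Ω → ℝ :=
  if rvLaw X P x = 0 then P
  else fun ω => (if X ω = x then P ω else 0) / rvLaw X P x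

/-- `F` is conditionable: for every discrete random variable and every
`P ∈ Δ_f(Ω)`, the conditioning family is summable. -/
def Conditionable {Ω : Type u} (F : (Ω → ℝ) → ℝ) : Prop :=
  ∀ (E : Type u) (_ : Countable E) (X : Ω → E) (P : Ω → ℝ),
    IsPMF P → shEntropy P < ⊤ →
      Summable fun x : E => rvLaw X P x * F (pmfCond X x P)

/-- A discrete random variable on `Ω`: a map to a countable target. -/
structure RV (Ω : Type u) : Type (u + 1) where
  target : Type u
  countable : Countable target
  map : Ω → target

/-- Averaged conditioning of a function by a random variable. -/
def acondRV {Ω : Type u} (A : RV Ω) (F : (Ω → ℝ) → ℝ) : (Ω → ℝ) → ℝ :=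
  fun P => ∑' x : A.target, rvLaw A.map P x * F (pmfCond A.map x P)

/-- The entropy function `I₁(A) : P ↦ H(A;P)` of a random variable. -/
def entropyFun {Ω : Type u} (A : RV Ω) : (Ω → ℝ) → ℝ :=
  fun P => (shEntropy (rvLaw A.map P)).toReal

/-- Interaction information `I_q(Y₁;…;Y_q)`, defined inductively by
`I₁ = entropy` and `I_q = I_{q−1} − Y_q.I_{q−1}` (the value for `q = 0` is junk). -/
def Iq {Ω : Type u} : (q : ℕ) → (Fin q → RV Ω) → (Ω → ℝ) → ℝ
  | 0, _ => fun _ => 0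
  | 1, Y => entropyFun (Y 0)
  | q + 2, Y => fun P =>
      Iq (q + 1) (fun i => Y i.castSucc) P
        - acondRV (Y (Fin.last (q + 1))) (Iq (q + 1) (fun i => Y i.castSucc)) P

/-- The joint random variable `X_L = ∏_{i ∈ L} X_i`. -/
def jointRV {Ω : Type u} {n : ℕ} (X : Fin n → RV Ω) (L : Finset (Fin n)) :
    RV Ω where
  target := (i : {j : Fin n // j ∈ L}) → (X i.1).target
  countable := by
    haveI : ∀ i : {j : Fin n // j ∈ L}, Countable ((X i.1).target) :=
      fun i => (X i.1).countable
    infer_instance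
  map := fun ω i => (X i.1).map ω

/-- The set `X̃(n)` of abstract atoms `p_I`, one for each nonempty `I ⊆ [n]`. -/
def Atom (n : ℕ) : Type :=
  {I : Finset (Fin n) // I.Nonempty}

/-- `X̃_L = ⋃_{i ∈ L} X̃_i`, the union of the circles of the variables in `L`. -/
def circlesOf {n : ℕ} (L : Finset (Fin n)) : Set (Atom n) :=
  {p | ∃ i ∈ L, i ∈ p.1}

/-! ### Entropy of countable discrete variables -/

/-- The fibre sums of a summable family over the values of a random variable add up to the
total. -/
theorem hasSum_rvLaw {Ω E : Type*} (X : Ω → E) {Q : Ω → ℝ} {a : ℝ} (hQ : HasSum Q a) :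
    HasSum (rvLaw X Q) a := by
  have h := hQ.tsum_fiberwise X
  have e : rvLaw X Q = fun c => ∑' b : X ⁻¹' {c}, Q b := by
    funext x
    rw [tsum_subtype]
    refine tsum_congr fun ω => ?_
    simp only [Set.indicator_apply, Set.mem_preimage, Set.mem_singleton_iff]
  rw [e]
  exact h

theorem summable_ite_fibre {Ω E : Type*} (X : Ω → E) (x : E) {Q : Ω → ℝ} (hQ : Summable Q) :
    Summable fun ω => if X ω = x then Q ω else 0 := by
  refine (hQ.indicator (X ⁻¹' {x})).congr fun ω => ?_
  simp only [Set.indicator_apply, Set.mem_preimage, Set.mem_singleton_iff]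

theorem IsPMF.law {Ω E : Type*} (X : Ω → E) {P : Ω → ℝ} (hP : IsPMF P) : IsPMF (rvLaw X P) := by
  refine ⟨fun x => tsum_nonneg fun ω => ?_, hasSum_rvLaw X hP.2⟩
  split_ifs
  exacts [hP.1 ω, le_rfl]

theorem IsPMF.le_one {Ω : Type*} {P : Ω → ℝ} (hP : IsPMF P) (ω : Ω) : P ω ≤ 1 :=
  le_hasSum hP.2 ω fun i _ => hP.1 i

theorem IsPMF.negMulLog_nonneg {Ω : Type*} {P : Ω → ℝ} (hP : IsPMF P) (ω : Ω) :
    0 ≤ Real.negMulLog (P ω) :=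
  Real.negMulLog_nonneg (hP.1 ω) (hP.le_one ω)

theorem shEntropy_eq {Ω : Type*} (P : Ω → ℝ) :
    shEntropy P = ∑' ω, ENNReal.ofReal (Real.negMulLog (P ω)) := by
  simp [shEntropy, Real.negMulLog]

theorem IsPMF.shEntropy_lt_top_iff {Ω : Type*} {P : Ω → ℝ} (hP : IsPMF P) :
    shEntropy P < ⊤ ↔ Summable fun ω => Real.negMulLog (P ω) := by
  rw [shEntropy_eq]
  refine ⟨fun h => ?_, fun h => h.tsum_ofReal_lt_top⟩
  have := ENNReal.summable_toReal h.ne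
  simpa [ENNReal.toReal_ofReal (hP.negMulLog_nonneg _)] using this

theorem IsPMF.toReal_shEntropy {Ω : Type*} {P : Ω → ℝ} (hP : IsPMF P) :
    (shEntropy P).toReal = ∑' ω, Real.negMulLog (P ω) := by
  rw [shEntropy_eq, ENNReal.tsum_toReal_eq fun _ => ENNReal.ofReal_ne_top]
  simp [ENNReal.toReal_ofReal (hP.negMulLog_nonneg _)]

theorem IsPMF.cond {Ω E : Type*} (X : Ω → E) (x : E) {P : Ω → ℝ} (hP : IsPMF P) :
    IsPMF (pmfCond X x P) := by
  unfold pmfCond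
  split_ifs with h
  · exact hP
  · refine ⟨fun ω => div_nonneg ?_ ((hP.law X).1 x), ?_⟩
    · split_ifs
      exacts [hP.1 ω, le_rfl]
    · have := (summable_ite_fibre X x hP.2.summable).hasSum.div_const (rvLaw X P x)
      rwa [show (∑' ω, if X ω = x then P ω else 0) = rvLaw X P x from rfl, div_self h] at this

theorem negMulLog_div {a p : ℝ} (hp : p ≠ 0) :
    Real.negMulLog (a / p) = (Real.negMulLog a + a * Real.log p) / p := by
  rcases eq_or_ne a 0 with rfl | ha
  · simp
  · rw [Real.negMulLog, Real.negMulLog, Real.log_div ha hp]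
    ring

/-- Conditioning keeps the entropy finite. -/
theorem IsPMF.shEntropy_cond_lt_top {Ω E : Type*} (X : Ω → E) (x : E) {P : Ω → ℝ}
    (hP : IsPMF P) (hH : shEntropy P < ⊤) : shEntropy (pmfCond X x P) < ⊤ := by
  rw [(hP.cond X x).shEntropy_lt_top_iff]
  rw [hP.shEntropy_lt_top_iff] at hH
  unfold pmfCond
  split_ifs with h
  · exact hH
  · simp only [negMulLog_div h]
    refine Summable.div_const (Summable.add ?_ ?_) _
    · refine (summable_ite_fibre X x hH).congr fun ω => ?_
      split_ifs <;> simp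
    · exact (summable_ite_fibre X x hP.2.summable).mul_right _

/-- Entropy does not increase under push-forward: if `s` is the mass of a fibre, then each mass
`a` in it satisfies `a ≤ s`, whence `-s log s = ∑ a (-log s) ≤ ∑ a (-log a)`. -/
theorem IsPMF.shEntropy_law_le {Ω E : Type*} (X : Ω → E) {P : Ω → ℝ} (hP : IsPMF P) :
    shEntropy (rvLaw X P) ≤ shEntropy P := by
  have key : ∀ x, ENNReal.ofReal (Real.negMulLog (rvLaw X P x)) ≤
      ∑' ω, if X ω = x then ENNReal.ofReal (Real.negMulLog (P ω)) else 0 := by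
    intro x
    have hs := summable_ite_fibre X x hP.2.summable
    have h0 : ∀ ω, 0 ≤ (if X ω = x then P ω else 0) := fun ω => by
      split_ifs
      exacts [hP.1 ω, le_rfl]
    have hlog : 0 ≤ -Real.log (rvLaw X P x) :=
      neg_nonneg.2 (Real.log_nonpos ((hP.law X).1 x) ((hP.law X).le_one x))
    have h1 : Real.negMulLog (rvLaw X P x)
        = ∑' ω, (if X ω = x then P ω else 0) * -Real.log (rvLaw X P x) := by
      rw [tsum_mul_right, Real.negMulLog, neg_mul_comm]
      rfl
    rw [h1, ENNReal.ofReal_tsum_of_nonneg (fun ω => mul_nonneg (h0 ω) hlog) (hs.mul_right _)]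
    refine ENNReal.tsum_le_tsum fun ω => ?_
    by_cases hω : X ω = x
    · simp only [hω, if_true]
      refine ENNReal.ofReal_le_ofReal ?_
      rcases (hP.1 ω).eq_or_lt with h | h
      · simp [← h]
      · have hle : P ω ≤ rvLaw X P x := by
          have := hs.le_tsum ω fun i _ => h0 i
          rwa [if_pos hω] at this
        rw [Real.negMulLog, neg_mul_comm]
        exact mul_le_mul_of_nonneg_left (neg_le_neg (Real.log_le_log h hle)) h.le
    · simp [hω]
  rw [shEntropy_eq, shEntropy_eq]
  refine (ENNReal.tsum_le_tsum key).trans ?_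
  rw [ENNReal.tsum_comm]
  refine ENNReal.tsum_le_tsum fun ω => ?_
  rw [tsum_eq_single (X ω) fun x hx => if_neg hx.symm, if_pos rfl]

/-- Relabelling the values injectively does not change the entropy. -/
theorem shEntropy_law_injective {Ω E F : Type*} (Z : Ω → E) {g : E → F}
    (hg : Function.Injective g) (P : Ω → ℝ) :
    shEntropy (rvLaw (fun ω => g (Z ω)) P) = shEntropy (rvLaw Z P) := by
  rw [shEntropy_eq, shEntropy_eq, ← hg.tsum_eq]
  · simp only [rvLaw, hg.eq_iff]
  · intro y hy
    by_contra hn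
    refine hy ?_
    have : rvLaw (fun ω => g (Z ω)) P y = 0 := by
      have : ∀ ω, ¬ g (Z ω) = y := fun ω h => hn ⟨_, h⟩
      simp [rvLaw, this]
    simp [this]

/-- The chain rule `A.H(B) = H(A,B) - H(A)`, together with the summability of the family defining
the left-hand side. Writing `p` for the law of `A` and `q` for the joint law, each term is
`p x * H(B; P|_{A=x}) = ∑ b, η (q (x, b)) - η (p x)` with `η t = -t log t`. -/
theorem hasSum_cond_entropy {Ω E F : Type*} (A : Ω → E) (B : Ω → F) {P : Ω → ℝ}
    (hP : IsPMF P) (hH : shEntropy P < ⊤) :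
    HasSum (fun x => rvLaw A P x * (shEntropy (rvLaw B (pmfCond A x P))).toReal)
      ((shEntropy (rvLaw (fun ω => (A ω, B ω)) P)).toReal - (shEntropy (rvLaw A P)).toReal) := by
  set q := rvLaw (fun ω => (A ω, B ω)) P with hq
  set p := rvLaw A P with hp
  have hqP : IsPMF q := hP.law _
  have hpP : IsPMF p := hP.law _
  have hqs := hqP.shEntropy_lt_top_iff.1 ((hP.shEntropy_law_le _).trans_lt hH)
  have hps := hpP.shEntropy_lt_top_iff.1 ((hP.shEntropy_law_le _).trans_lt hH)
  have hqx : ∀ x b, q (x, b) = rvLaw B (fun ω => if A ω = x then P ω else 0) b := by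
    intro x b
    simp only [hq, rvLaw, Prod.mk.injEq]
    refine tsum_congr fun ω => ?_
    by_cases h1 : A ω = x <;> by_cases h2 : B ω = b <;> simp [h1, h2]
  have hmarg : ∀ x, HasSum (fun b => q (x, b)) (p x) := by
    intro x
    simp only [hqx]
    exact hasSum_rvLaw B (summable_ite_fibre A x hP.2.summable).hasSum
  rw [hqP.toReal_shEntropy, hpP.toReal_shEntropy]
  have hfib : HasSum (fun x => ∑' b, Real.negMulLog (q (x, b))) (∑' z, Real.negMulLog (q z)) :=
    hqs.hasSum.prod_fiberwise fun x => (hqs.prod_factor x).hasSum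
  refine (hfib.sub hps.hasSum).congr_fun ?_
  intro x
  by_cases h : p x = 0
  · have hz : ∀ b, q (x, b) = 0 := fun b =>
      (hasSum_zero_iff_of_nonneg fun b => hqP.1 (x, b)).1 (h ▸ hmarg x) |> fun e => congrFun e b
    simp [h, hz]
  · rw [((hP.cond A x).law B).toReal_shEntropy]
    have hc : ∀ b, rvLaw B (pmfCond A x P) b = q (x, b) / p x := by
      intro b
      rw [hqx, rvLaw, rvLaw, ← tsum_div_const]
      refine tsum_congr fun ω => ?_
      rw [pmfCond, if_neg h]
      split_ifs <;> simp [hp]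
    simp only [hc, negMulLog_div h]
    rw [tsum_div_const, (hqs.prod_factor x).tsum_add ((hmarg x).summable.mul_right _),
      tsum_mul_right, (hmarg x).tsum_eq, mul_div_cancel₀ _ h, Real.negMulLog]
    ring

/-! ### Joint variables -/

/-- The joint variable of `J ∪ K` determines, and is determined by, the pair of joint variables of
`J` and `K`. -/
theorem shEntropy_pair {Ω : Type u} {n : ℕ} (X : Fin n → RV Ω) (J K : Finset (Fin n))
    (P : Ω → ℝ) :
    (shEntropy (rvLaw (fun ω => ((jointRV X J).map ω, (jointRV X K).map ω)) P)).toReal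
      = entropyFun (jointRV X (J ∪ K)) P := by
  let g : (jointRV X (J ∪ K)).target → (jointRV X J).target × (jointRV X K).target := fun z =>
    (fun i => z ⟨i.1, Finset.mem_union_left _ i.2⟩, fun i => z ⟨i.1, Finset.mem_union_right _ i.2⟩)
  have hg : Function.Injective g := by
    intro z w h
    funext ⟨i, hi⟩
    rcases Finset.mem_union.1 hi with hJ | hK
    · exact congrFun (congrArg Prod.fst h) ⟨i, hJ⟩
    · exact congrFun (congrArg Prod.snd h) ⟨i, hK⟩
  exact congrArg ENNReal.toReal (shEntropy_law_injective (jointRV X (J ∪ K)).map hg P)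

theorem hasSum_cond_joint {Ω : Type u} {n : ℕ} (X : Fin n → RV Ω) (J K : Finset (Fin n))
    {P : Ω → ℝ} (hP : IsPMF P) (hH : shEntropy P < ⊤) :
    HasSum (fun x => rvLaw (jointRV X J).map P x *
        entropyFun (jointRV X K) (pmfCond (jointRV X J).map x P))
      (entropyFun (jointRV X (J ∪ K)) P - entropyFun (jointRV X J) P) := by
  rw [← shEntropy_pair]
  exact hasSum_cond_entropy _ _ hP hH

theorem entropyFun_joint_empty {Ω : Type u} {n : ℕ} (X : Fin n → RV Ω) {P : Ω → ℝ}
    (hP : IsPMF P) : entropyFun (jointRV X ∅) P = 0 := by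
  have h1 : ∀ x, rvLaw (jointRV X ∅).map P x = 1 := by
    intro x
    have hx : ∀ ω, (jointRV X ∅).map ω = x := fun ω => by
      funext ⟨i, hi⟩
      simp at hi
    simp [rvLaw, hx, hP.2.tsum_eq]
  simp [entropyFun, shEntropy, h1]

/-! ### Möbius inversion on the atoms -/

instance {n : ℕ} : Fintype (Atom n) :=
  inferInstanceAs (Fintype {I : Finset (Fin n) // I.Nonempty})

/-- The coefficient of `I₁(X_K)` in the value of the measure on the atom `p_I`. -/
def moebCoeff {n : ℕ} : Matrix (Atom n) (Atom n) ℝ := fun I K =>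
  if (I.1)ᶜ ⊆ K.1 then (-1 : ℝ) ^ (K.1.card + I.1.card + 1 - n) else 0

/-- The incidence matrix: the entry at `(K, p)` says whether `p` lies in `X̃_K`. -/
def circleInc {n : ℕ} : Matrix (Atom n) (Atom n) ℝ := fun K p =>
  if p ∈ circlesOf K.1 then 1 else 0

/-- Sums over atoms weighted by `moebCoeff` are the sums over nonempty supersets of `Iᶜ`. -/
theorem sum_moebCoeff {n : ℕ} (I : Atom n) (h : Finset (Fin n) → ℝ) :
    ∑ K : Atom n, moebCoeff I K * h K.1
      = ∑ K ∈ Finset.univ.filter (fun K : Finset (Fin n) => K.Nonempty ∧ (I.1)ᶜ ⊆ K),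
          (-1 : ℝ) ^ (K.card + I.1.card + 1 - n) * h K := by
  rw [← Finset.filter_filter, Finset.sum_filter]
  rw [Finset.sum_subtype (p := fun K : Finset (Fin n) => K.Nonempty)
    (Finset.univ.filter fun K : Finset (Fin n) => K.Nonempty) (by simp)]
  refine Finset.sum_congr rfl fun K _ => ?_
  simp only [moebCoeff, ite_mul, zero_mul]

theorem sum_powerset_neg_one_pow_real {α : Type*} [DecidableEq α] (s : Finset α) :
    ∑ T ∈ s.powerset, (-1 : ℝ) ^ T.card = if s = ∅ then 1 else 0 := by
  have := congrArg (Int.cast : ℤ → ℝ) (Finset.sum_powerset_neg_one_pow_card (x := s))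
  push_cast at this
  exact this

/-- The coefficients `moebCoeff` express the indicator of an atom through the indicators of the
sets `X̃_K`. With `K = Iᶜ ∪ T` and `T ⊆ I`, the entry at `(I, B)` is
`-∑ T, (-1) ^ |T| + ∑ T, (-1) ^ |T| [K ∩ B = ∅]`; the first sum vanishes as `I` is nonempty, and
the second one is empty unless `B ⊆ I`, in which case it runs over `T ⊆ I \ B`. -/
theorem moebCoeff_mul_circleInc {n : ℕ} :
    (moebCoeff * circleInc : Matrix (Atom n) (Atom n) ℝ) = 1 := by
  ext a b
  have hone : (if a = b then (1 : ℝ) else 0) = if a.1 = b.1 then 1 else 0 :=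
    if_congr Subtype.ext_iff rfl rfl
  rw [Matrix.mul_apply, Matrix.one_apply, hone]
  obtain ⟨I, hI⟩ := a
  obtain ⟨B, hB⟩ := b
  have h1 := sum_moebCoeff (⟨I, hI⟩ : Atom n)
    (fun K => if ∃ i ∈ K, i ∈ B then (1 : ℝ) else 0)
  have hinc : ∀ K : Atom n, circleInc K ⟨B, hB⟩ = if ∃ i ∈ K.1, i ∈ B then (1 : ℝ) else 0 :=
    fun K => if_congr Iff.rfl rfl rfl
  simp only [hinc]
  refine h1.trans ?_
  have h2 : ∑ K ∈ Finset.univ.filter (fun K : Finset (Fin n) => K.Nonempty ∧ Iᶜ ⊆ K),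
        (-1 : ℝ) ^ (K.card + I.card + 1 - n) * (if ∃ i ∈ K, i ∈ B then (1 : ℝ) else 0)
      = ∑ K ∈ Finset.univ.filter (fun K : Finset (Fin n) => Iᶜ ⊆ K),
        (-1 : ℝ) ^ (K.card + I.card + 1 - n) * (if ∃ i ∈ K, i ∈ B then (1 : ℝ) else 0) := by
    refine Finset.sum_subset (fun K => by simp +contextual) fun K hK hK' => ?_
    simp only [Finset.mem_filter, Finset.mem_univ, true_and] at hK hK'
    have : K = ∅ := Finset.not_nonempty_iff_eq_empty.1 fun h => hK' ⟨h, hK⟩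
    simp [this]
  have h3 : ∑ K ∈ Finset.univ.filter (fun K : Finset (Fin n) => Iᶜ ⊆ K),
        (-1 : ℝ) ^ (K.card + I.card + 1 - n) * (if ∃ i ∈ K, i ∈ B then (1 : ℝ) else 0)
      = ∑ T ∈ I.powerset,
        (-(-1 : ℝ) ^ T.card + if B ⊆ I ∧ T ⊆ I \ B then (-1 : ℝ) ^ T.card else 0) := by
    symm
    refine Finset.sum_bij' (fun T _ => Iᶜ ∪ T) (fun K _ => K ∩ I) ?_ ?_ ?_ ?_ ?_
    · intro T _
      simp
    · intro K _
      simp [Finset.inter_subset_right]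
    · intro T hT
      ext i
      have hT : i ∈ T → i ∈ I := fun h => Finset.mem_powerset.1 hT h
      simp only [Finset.mem_inter, Finset.mem_union, Finset.mem_compl]
      tauto
    · intro K hK
      have hK := (Finset.mem_filter.1 hK).2
      ext i
      have := @hK i
      simp only [Finset.mem_inter, Finset.mem_union, Finset.mem_compl] at this ⊢
      tauto
    · intro T hT
      have hT := Finset.mem_powerset.1 hT
      have hc : (Iᶜ ∪ T).card + I.card + 1 - n = T.card + 1 := by
        rw [Finset.card_union_of_disjoint
          (Finset.disjoint_left.2 fun i hi hi' => Finset.mem_compl.1 hi (hT hi')),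
          Finset.card_compl, Fintype.card_fin]
        have := Finset.card_le_univ I
        rw [Fintype.card_fin] at this
        omega
      have he : (∃ i ∈ Iᶜ ∪ T, i ∈ B) ↔ ¬ (B ⊆ I ∧ T ⊆ I \ B) := by
        constructor
        · rintro ⟨i, hi, hiB⟩ ⟨hBI, hTB⟩
          rcases Finset.mem_union.1 hi with h | h
          · exact Finset.mem_compl.1 h (hBI hiB)
          · exact (Finset.mem_sdiff.1 (hTB h)).2 hiB
        · intro h
          by_contra hne
          push Not at hne
          refine h ⟨fun i hi => ?_, fun i hi => ?_⟩
          · by_contra hiI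
            exact hne i (by simp [hiI]) hi
          · exact Finset.mem_sdiff.2 ⟨hT hi, hne i (by simp [hi])⟩
      rw [hc, pow_succ]
      by_cases h : B ⊆ I ∧ T ⊆ I \ B
      · rw [if_pos h, if_neg (fun h' => he.1 h' h)]
        ring
      · rw [if_neg h, if_pos (he.2 h)]
        ring
  rw [h2, h3, Finset.sum_add_distrib, Finset.sum_neg_distrib, sum_powerset_neg_one_pow_real,
    if_neg hI.ne_empty, neg_zero, zero_add]
  by_cases hBI : B ⊆ I
  · rw [← Finset.sum_filter]
    have : I.powerset.filter (fun T => B ⊆ I ∧ T ⊆ I \ B) = (I \ B).powerset := by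
      ext T
      simp only [Finset.mem_filter, Finset.mem_powerset, hBI, true_and]
      exact ⟨fun h => h.2, fun h => ⟨h.trans Finset.sdiff_subset, h⟩⟩
    rw [this, sum_powerset_neg_one_pow_real]
    refine if_congr ?_ rfl rfl
    rw [Finset.sdiff_eq_empty_iff_subset]
    exact ⟨fun h => h.antisymm hBI, fun h => h.subset⟩
  · rw [if_neg fun h => hBI h.symm.subset]
    simp [hBI]

/-! ### The information measure -/

/-- The value of the information measure on a single atom. -/
def atomVal {Ω : Type u} {n : ℕ} (X : Fin n → RV Ω) (a : Atom n) (P : Ω → ℝ) : ℝ :=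
  ∑ K : Atom n, moebCoeff a K * entropyFun (jointRV X K.1) P

/-- The information measure: the additive set function with values `atomVal` on atoms. -/
def infoMeasure {Ω : Type u} {n : ℕ} (X : Fin n → RV Ω) (A : Set (Atom n)) (P : Ω → ℝ) : ℝ :=
  ∑ a : Atom n, if a ∈ A then atomVal X a P else 0

/-- `μ(X̃_K) = I₁(X_K)` on probability measures. For nonempty `K` this is the statement that the
one-sided inverse `moebCoeff` of `circleInc` is two-sided. -/
theorem infoMeasure_circlesOf {Ω : Type u} {n : ℕ} (X : Fin n → RV Ω) (K : Finset (Fin n))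
    {P : Ω → ℝ} (hP : IsPMF P) :
    infoMeasure X (circlesOf K) P = entropyFun (jointRV X K) P := by
  rcases K.eq_empty_or_nonempty with rfl | hK
  · rw [entropyFun_joint_empty X hP]
    simp [infoMeasure, circlesOf]
  · have hinv : (circleInc * moebCoeff : Matrix (Atom n) (Atom n) ℝ) = 1 :=
      mul_eq_one_comm.1 moebCoeff_mul_circleInc
    have h : circleInc.mulVec (moebCoeff.mulVec fun K : Atom n => entropyFun (jointRV X K.1) P)
        = fun K : Atom n => entropyFun (jointRV X K.1) P := by
      rw [Matrix.mulVec_mulVec, hinv, Matrix.one_mulVec]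
    have := congrFun h ⟨K, hK⟩
    rw [← this]
    simp only [infoMeasure, Matrix.mulVec, dotProduct, circleInc, ite_mul, one_mul, zero_mul,
      atomVal]

/-- Conditioning an atom on `X_J` keeps it if it lies outside `X̃_J` and kills it otherwise. -/
theorem hasSum_cond_atomVal {Ω : Type u} {n : ℕ} (X : Fin n → RV Ω) (J : Finset (Fin n))
    (a : Atom n) {P : Ω → ℝ} (hP : IsPMF P) (hH : shEntropy P < ⊤) :
    HasSum (fun x => rvLaw (jointRV X J).map P x * atomVal X a (pmfCond (jointRV X J).map x P))
      (if a ∈ circlesOf J then 0 else atomVal X a P) := by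
  have h1 : HasSum (fun x => ∑ K : Atom n, moebCoeff a K * (rvLaw (jointRV X J).map P x *
        entropyFun (jointRV X K.1) (pmfCond (jointRV X J).map x P)))
      (∑ K : Atom n, moebCoeff a K *
        (entropyFun (jointRV X (J ∪ K.1)) P - entropyFun (jointRV X J) P)) :=
    hasSum_sum fun K _ => (hasSum_cond_joint X J K.1 hP hH).mul_left _
  have h2 : ∀ K : Atom n, entropyFun (jointRV X (J ∪ K.1)) P - entropyFun (jointRV X J) P
      = ∑ b : Atom n, circleInc K b * (if b ∈ circlesOf J then 0 else atomVal X b P) := by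
    intro K
    rw [← infoMeasure_circlesOf X _ hP, ← infoMeasure_circlesOf X _ hP, infoMeasure, infoMeasure,
      ← Finset.sum_sub_distrib]
    refine Finset.sum_congr rfl fun b _ => ?_
    have hu : b ∈ circlesOf (J ∪ K.1) ↔ b ∈ circlesOf J ∨ b ∈ circlesOf K.1 := by
      simp only [circlesOf, Set.mem_ofPred_eq, Finset.mem_union, or_and_right, exists_or]
    by_cases hJ : b ∈ circlesOf J <;> by_cases hK : b ∈ circlesOf K.1 <;>
      simp [circleInc, hu, hJ, hK]
  have h3 : moebCoeff.mulVec (circleInc.mulVec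
        fun b : Atom n => if b ∈ circlesOf J then 0 else atomVal X b P)
      = fun b : Atom n => if b ∈ circlesOf J then 0 else atomVal X b P := by
    rw [Matrix.mulVec_mulVec, moebCoeff_mul_circleInc, Matrix.one_mulVec]
  have h4 := congrFun h3 a
  simp only [Matrix.mulVec, dotProduct] at h4
  simp only [h2] at h1
  rw [h4] at h1
  convert h1 using 2 with x
  rw [atomVal, Finset.mul_sum]
  exact Finset.sum_congr rfl fun K _ => by ring

/-- Conditioning on `X_J` amounts to removing `X̃_J`. -/
theorem acondRV_infoMeasure {Ω : Type u} {n : ℕ} (X : Fin n → RV Ω) (J : Finset (Fin n))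
    (A : Set (Atom n)) {P : Ω → ℝ} (hP : IsPMF P) (hH : shEntropy P < ⊤) :
    acondRV (jointRV X J) (infoMeasure X A) P = infoMeasure X (A \ circlesOf J) P := by
  have h : HasSum (fun x => ∑ a : Atom n, (if a ∈ A then (1 : ℝ) else 0) *
        (rvLaw (jointRV X J).map P x * atomVal X a (pmfCond (jointRV X J).map x P)))
      (∑ a : Atom n, (if a ∈ A then (1 : ℝ) else 0) *
        (if a ∈ circlesOf J then 0 else atomVal X a P)) :=
    hasSum_sum fun a _ => (hasSum_cond_atomVal X J a hP hH).mul_left _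
  refine (HasSum.tsum_eq ?_ : acondRV (jointRV X J) (infoMeasure X A) P = _)
  convert h using 1
  · funext x
    rw [infoMeasure, Finset.mul_sum]
    refine Finset.sum_congr rfl fun a _ => ?_
    by_cases ha : a ∈ A <;> simp [ha]
  · rw [infoMeasure]
    refine Finset.sum_congr rfl fun a _ => ?_
    by_cases ha : a ∈ A <;> by_cases hJ : a ∈ circlesOf J <;> simp [ha, hJ]

/-- Averaged conditioning at `P ∈ Δ_f(Ω)` only sees the values of a function on `Δ_f(Ω)`. -/
theorem acondRV_congr {Ω : Type u} (A : RV Ω) {F G : (Ω → ℝ) → ℝ}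
    (hFG : ∀ P, IsPMF P → shEntropy P < ⊤ → F P = G P) {P : Ω → ℝ} (hP : IsPMF P)
    (hH : shEntropy P < ⊤) : acondRV A F P = acondRV A G P := by
  refine tsum_congr fun x => ?_
  rw [hFG _ (hP.cond A.map x) (hP.shEntropy_cond_lt_top A.map x hH)]

theorem infoMeasure_union {Ω : Type u} {n : ℕ} (X : Fin n → RV Ω) {A B : Set (Atom n)}
    (hAB : Disjoint A B) (P : Ω → ℝ) :
    infoMeasure X (A ∪ B) P = infoMeasure X A P + infoMeasure X B P := by
  rw [infoMeasure, infoMeasure, infoMeasure, ← Finset.sum_add_distrib]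
  refine Finset.sum_congr rfl fun a _ => ?_
  by_cases ha : a ∈ A
  · have hb : a ∉ B := Set.disjoint_left.1 hAB ha
    simp [ha, hb]
  · simp [ha]

/-- The interaction information is the measure of the intersection of the circles; the inductive
step is `μ(S) - μ(S \ X̃_L) = μ(S ∩ X̃_L)`. -/
theorem Iq_eq_infoMeasure {Ω : Type u} {n : ℕ} (X : Fin n → RV Ω) (q : ℕ)
    (L : Fin (q + 1) → Finset (Fin n)) {P : Ω → ℝ} (hP : IsPMF P) (hH : shEntropy P < ⊤) :
    Iq (q + 1) (fun k => jointRV X (L k)) P = infoMeasure X (⋂ k, circlesOf (L k)) P := by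
  induction q generalizing P with
  | zero =>
    have : (⋂ k : Fin (0 + 1), circlesOf (L k)) = circlesOf (L 0) := by
      ext a
      simp
    rw [this, infoMeasure_circlesOf X _ hP]
    rfl
  | succ q ih =>
    set S := ⋂ k : Fin (q + 1), circlesOf (L k.castSucc) with hS
    have hSL : (⋂ k, circlesOf (L k)) = S ∩ circlesOf (L (Fin.last (q + 1))) := by
      ext a
      simp [hS, Fin.forall_fin_succ']
    have hrec : Iq (q + 1 + 1) (fun k => jointRV X (L k)) P
        = Iq (q + 1) (fun k : Fin (q + 1) => jointRV X (L k.castSucc)) P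
          - acondRV (jointRV X (L (Fin.last (q + 1))))
              (Iq (q + 1) fun k : Fin (q + 1) => jointRV X (L k.castSucc)) P := rfl
    have hsplit := infoMeasure_union X
      (Set.disjoint_sdiff_inter (s := S) (t := circlesOf (L (Fin.last (q + 1))))) P
    rw [Set.sdiff_union_inter] at hsplit
    rw [hrec, ih (fun k => L k.castSucc) hP hH,
      acondRV_congr _ (fun P hP hH => ih (fun k => L k.castSucc) hP hH) hP hH,
      acondRV_infoMeasure X _ _ hP hH, hSL, hsplit]
    ring

theorem conditionable_infoMeasure {Ω : Type u} {n : ℕ} (X : Fin n → RV Ω) (A : Set (Atom n)) :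
    Conditionable (infoMeasure X A) := by
  intro E _ Y P hP hH
  have h : Summable fun x => ∑ a : Atom n, ∑ K : Atom n,
      (if a ∈ A then moebCoeff a K else 0) *
        (rvLaw Y P x * entropyFun (jointRV X K.1) (pmfCond Y x P)) :=
    summable_sum fun a _ => summable_sum fun K _ =>
      (hasSum_cond_entropy Y (jointRV X K.1).map hP hH).summable.mul_left _
  convert h using 2 with x
  rw [infoMeasure, Finset.mul_sum]
  refine Finset.sum_congr rfl fun a _ => ?_
  by_cases ha : a ∈ A
  · simp only [ha, if_true, atomVal, Finset.mul_sum]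
    exact Finset.sum_congr rfl fun K _ => by ring
  · simp [ha]

theorem infoMeasure_singleton {Ω : Type u} {n : ℕ} (X : Fin n → RV Ω) (a : Atom n) (P : Ω → ℝ) :
    infoMeasure X {a} P = atomVal X a P := by
  simp [infoMeasure]

/-- Hu's theorem for Shannon entropy of countable discrete random variables:
there is an information measure `μ` (valued in conditionable functions,
additive over disjoint unions) with
`X_J.I_q(X_{L₁};…;X_{L_q}) = μ(⋂_k X̃_{L_k} \ X̃_J)` on `Δ_f(Ω)`, and `μ` can be
given on atoms by the inclusion–exclusion formula
`μ(p_I) = ∑_{∅≠K⊇Iᶜ} (−1)^{|K|+|I|+1−n}·I₁(X_K)`. -/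
theorem stmt10 {Ω : Type u} [Countable Ω] {n : ℕ} (X : Fin n → RV Ω) :
    ∃ μ : Set (Atom n) → (Ω → ℝ) → ℝ,
      (∀ A : Set (Atom n), Conditionable (μ A)) ∧
      (∀ A B : Set (Atom n), Disjoint A B →
        ∀ P : Ω → ℝ, μ (A ∪ B) P = μ A P + μ B P) ∧
      (∀ (I : Finset (Fin n)) (hI : I.Nonempty) (P : Ω → ℝ),
        μ {(⟨I, hI⟩ : Atom n)} P
          = ∑ K ∈ Finset.univ.filter
              (fun K : Finset (Fin n) => K.Nonempty ∧ Iᶜ ⊆ K),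
              (-1 : ℝ) ^ (K.card + I.card + 1 - n) * entropyFun (jointRV X K) P) ∧
      (∀ q : ℕ, 1 ≤ q → ∀ (L : Fin q → Finset (Fin n)) (J : Finset (Fin n)),
        ∀ P : Ω → ℝ, IsPMF P → shEntropy P < ⊤ →
          acondRV (jointRV X J) (Iq q fun k => jointRV X (L k)) P
            = μ ((⋂ k, circlesOf (L k)) \ circlesOf J) P) := by
  refine ⟨infoMeasure X, conditionable_infoMeasure X, fun A B hAB => infoMeasure_union X hAB,
    fun I hI P => ?_, fun q hq L J P hP hH => ?_⟩
  · refine (infoMeasure_singleton X (⟨I, hI⟩ : Atom n) P).trans ?_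
    exact sum_moebCoeff ⟨I, hI⟩ fun K => entropyFun (jointRV X K) P
  · obtain ⟨q, rfl⟩ := Nat.exists_eq_add_of_le' hq
    rw [acondRV_congr _ (fun P hP hH => Iq_eq_infoMeasure X q L hP hH) hP hH,
      acondRV_infoMeasure X J _ hP hH]
end
end

section
/- Let M be a commutative idempotent monoid generated by X₁,…,X_n, G an abelian group, . : M × G → G an additive monoid action, and F₁ : M → G a function satisfying the chain rule F₁(XY) = F₁(X) + X.F₁(Y) for all X, Y ∈ M; define F_q : M^q → G inductively by F_q(Y₁;…;Y_q) := F_{q−1}(Y₁;…;Y_{q−1}) − Y_q.F_{q−1}(Y₁;…;Y_{q−1}). Then the unique G-valued measure μ : 2^{X̃} → G determined on atoms by μ({p_I}) = ∑_{∅≠K⊇I^c} (−1)^{|K|+|I|+1−n}·F₁(X_K) (where I^c = [n]∖I) satisfies, for all q ≥ 1 and all J, L₁,…,L_q ⊆ [n]: X_J.F_q(X_{L₁};…;X_{L_q}) = μ(⋂_{k=1}^q X̃_{L_k} \ X̃_J). -/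
/-!
Write `f K = F₁(X_K)`, where `f ∅ = 0` by the chain rule, and let `w I` be the prescribed mass of
the atom `p_I`. Up to the sign `-1`, `w Tᶜ` is the Möbius transform of `f` along supersets of `T`,
so Möbius inversion (`sum_superset_inversion`) gives `∑_{T ⊇ L} w Tᶜ = -f L`. The atoms of `X̃_L`
are the `p_I` whose complement does not contain `L`, hence `μ(X̃_L) = -f ∅ + f L = f L`
(`atomMeasure_circlesOf`).

Given this, the identity follows by induction on `q`. For `q = 1` the chain rule and the identity
`X̃_{J ∪ L} = X̃_J ⊔ (X̃_L \ X̃_J)` express both sides as `f (J ∪ L) - f J`. In the inductive step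
`X_J.F_{q+1} = X_J.F_q - X_{J ∪ L_{q+1}}.F_q`, which matches the decomposition of `A \ X̃_J` into
the parts inside and outside `X̃_{L_{q+1}}`.
-/

open scoped Classical

noncomputable section

universe u v

/-- The higher interaction terms `F_q`, defined inductively from `F₁` by
`F_q(Y₁;…;Y_q) = F_{q−1}(Y₁;…;Y_{q−1}) − Y_q.F_{q−1}(Y₁;…;Y_{q−1})`
(the value for `q = 0` is junk). -/
def Fq {M : Type u} {G : Type v} [CommMonoid M] [AddCommGroup G]
    (act : M → G → G) (F1 : M → G) : (q : ℕ) → (Fin q → M) → G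
  | 0, _ => 0
  | 1, Y => F1 (Y 0)
  | q + 2, Y =>
      Fq act F1 (q + 1) (fun i => Y i.castSucc)
        - act (Y (Fin.last (q + 1))) (Fq act F1 (q + 1) (fun i => Y i.castSucc))

/-- The mass prescribed for the atom `p_I`, with `f K` standing for `F₁(X_K)`. It is defined
for `I = ∅` too, where it does not correspond to an atom. -/
def atomWeight {G : Type v} [AddCommGroup G] {n : ℕ} (f : Finset (Fin n) → G)
    (I : Finset (Fin n)) : G :=
  ∑ K ∈ Finset.univ.filter (fun K : Finset (Fin n) => K.Nonempty ∧ Iᶜ ⊆ K),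
    (-1 : ℤ) ^ (K.card + I.card + 1 - n) • f K

/-- The measure with mass `w I` at the atom `p_I`. -/
def atomMeasure {G : Type v} [AddCommGroup G] {n : ℕ} (w : Finset (Fin n) → G)
    (A : Set (Atom n)) : G :=
  ∑ I : Finset (Fin n), if ∃ h : I.Nonempty, (⟨I, h⟩ : Atom n) ∈ A then w I else 0

lemma atomMeasure_union {G : Type v} [AddCommGroup G] {n : ℕ} (w : Finset (Fin n) → G)
    {A B : Set (Atom n)} (hAB : Disjoint A B) :
    atomMeasure w (A ∪ B) = atomMeasure w A + atomMeasure w B := by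
  unfold atomMeasure
  rw [← Finset.sum_add_distrib]
  refine Finset.sum_congr rfl fun I _ => ?_
  have hor : (∃ h : I.Nonempty, (⟨I, h⟩ : Atom n) ∈ A ∪ B)
      ↔ (∃ h : I.Nonempty, (⟨I, h⟩ : Atom n) ∈ A) ∨ ∃ h : I.Nonempty, (⟨I, h⟩ : Atom n) ∈ B :=
    exists_or
  have hnot : (∃ h : I.Nonempty, (⟨I, h⟩ : Atom n) ∈ A)
      → ¬ ∃ h : I.Nonempty, (⟨I, h⟩ : Atom n) ∈ B :=
    fun ⟨_, hA⟩ ⟨_, hB⟩ => Set.disjoint_left.mp hAB hA hB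
  rw [if_congr hor rfl rfl]
  split_ifs <;> simp_all

lemma atomMeasure_singleton {G : Type v} [AddCommGroup G] {n : ℕ} (w : Finset (Fin n) → G)
    (I : Finset (Fin n)) (hI : I.Nonempty) :
    atomMeasure w {(⟨I, hI⟩ : Atom n)} = w I := by
  unfold atomMeasure
  rw [Finset.sum_eq_single I]
  · exact if_pos ⟨hI, rfl⟩
  · intro K _ hK
    refine if_neg ?_
    rintro ⟨h, h'⟩
    exact hK (congrArg Subtype.val (Set.mem_singleton_iff.mp h'))
  · exact fun h => absurd (Finset.mem_univ _) h

lemma atomWeight_compl {G : Type v} [AddCommGroup G] {n : ℕ} (f : Finset (Fin n) → G)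
    (f0 : f ∅ = 0) (T : Finset (Fin n)) :
    atomWeight f Tᶜ
      = -∑ K : Finset (Fin n), if T ⊆ K then (-1 : ℤ) ^ (K.card + T.card) • f K else 0 := by
  unfold atomWeight
  rw [Finset.sum_filter, ← Finset.sum_neg_distrib]
  refine Finset.sum_congr rfl fun K _ => ?_
  by_cases hT : T ⊆ K
  · by_cases hK : K.Nonempty
    · have h1 := Finset.card_le_card hT
      have h2 : T.card ≤ n := by simpa using Finset.card_le_univ T
      obtain ⟨d, hd⟩ := Nat.exists_eq_add_of_le h1
      have e : K.card + Tᶜ.card + 1 - n = d + 1 := by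
        rw [Finset.card_compl, Fintype.card_fin]; omega
      have e' : K.card + T.card = 2 * T.card + d := by omega
      simp [hT, hK, e, e', pow_add, pow_mul]
    · rw [Finset.not_nonempty_iff_eq_empty] at hK
      subst hK
      simp [f0]
  · simp [hT]

/-- The interval `[L, K]` of the Boolean lattice has Möbius value zero unless `K = L`. -/
lemma sum_interval_sign {n : ℕ} (L K : Finset (Fin n)) :
    (∑ T : Finset (Fin n), if L ⊆ T ∧ T ⊆ K then (-1 : ℤ) ^ (K.card + T.card) else 0)
      = if K = L then 1 else 0 := by
  by_cases hKL : K = L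
  · subst hKL
    rw [Finset.sum_eq_single K]
    · simp [← two_mul, pow_mul]
    · intro T _ hT
      refine if_neg ?_
      rintro ⟨h1, h2⟩
      exact hT (h2.antisymm h1)
    · simp
  rw [if_neg hKL]
  by_cases hLK : L ⊆ K
  · obtain ⟨a, haK, haL⟩ : ∃ a ∈ K, a ∉ L := by
      by_contra! h
      exact hKL (Finset.Subset.antisymm h hLK)
    -- Toggling membership of `a` is a sign-reversing involution of `[L, K]`.
    rw [← Finset.sum_filter]
    refine Finset.sum_involution (fun T _ => if a ∈ T then T.erase a else insert a T) ?_ ?_ ?_ ?_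
    · intro T _
      by_cases haT : a ∈ T
      · have := Finset.card_erase_add_one haT
        simp only [haT, if_true]
        rw [← this]; ring
      · simp only [haT, if_false]
        rw [Finset.card_insert_of_notMem haT]; ring
    · intro T _ _ h
      by_cases haT : a ∈ T
      · simp [haT] at h
      · simp [haT] at h
    · intro T hT
      simp only [Finset.mem_filter, Finset.mem_univ, true_and] at hT ⊢
      by_cases haT : a ∈ T
      · simp only [haT, if_true]
        exact ⟨Finset.subset_erase.mpr ⟨hT.1, haL⟩, (Finset.erase_subset _ _).trans hT.2⟩
      · simp only [haT, if_false]
        exact ⟨hT.1.trans (Finset.subset_insert _ _), Finset.insert_subset haK hT.2⟩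
    · intro T _
      by_cases haT : a ∈ T <;> simp [haT]
  · refine Finset.sum_eq_zero fun T _ => if_neg ?_
    rintro ⟨h1, h2⟩
    exact hLK (h1.trans h2)

/-- Möbius inversion along supersets in the Boolean lattice. -/
lemma sum_superset_inversion {G : Type v} [AddCommGroup G] {n : ℕ} (f : Finset (Fin n) → G)
    (L : Finset (Fin n)) :
    (∑ T : Finset (Fin n), if L ⊆ T then
      ∑ K : Finset (Fin n), (if T ⊆ K then (-1 : ℤ) ^ (K.card + T.card) • f K else 0) else 0)
      = f L := by
  calc _ = ∑ T : Finset (Fin n), ∑ K : Finset (Fin n),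
          (if L ⊆ T ∧ T ⊆ K then (-1 : ℤ) ^ (K.card + T.card) else 0) • f K := by
        refine Finset.sum_congr rfl fun T _ => ?_
        by_cases h : L ⊆ T <;> simp [h, ite_smul]
    _ = ∑ K : Finset (Fin n), (if K = L then (1 : ℤ) else 0) • f K := by
        rw [Finset.sum_comm]
        refine Finset.sum_congr rfl fun K _ => ?_
        rw [← Finset.sum_smul, sum_interval_sign]
    _ = f L := by simp [ite_smul]

/-- The case `q = 1`, `J = ∅` of the theorem: `μ(X̃_L) = F₁(X_L)`. -/
lemma atomMeasure_circlesOf {G : Type v} [AddCommGroup G] {n : ℕ} (f : Finset (Fin n) → G)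
    (f0 : f ∅ = 0) (L : Finset (Fin n)) :
    atomMeasure (atomWeight f) (circlesOf L) = f L := by
  have key : ∀ S : Finset (Fin n),
      (∑ T : Finset (Fin n), if S ⊆ T then atomWeight f Tᶜ else 0) = -f S := by
    intro S
    rw [← sum_superset_inversion f S, ← Finset.sum_neg_distrib]
    refine Finset.sum_congr rfl fun T _ => ?_
    rw [atomWeight_compl f f0]
    split_ifs <;> simp
  have hreindex : atomMeasure (atomWeight f) (circlesOf L)
      = ∑ T : Finset (Fin n), if L ⊆ T then 0 else atomWeight f Tᶜ := by
    unfold atomMeasure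
    rw [← Equiv.sum_comp (Function.Involutive.toPerm (compl : Finset (Fin n) → _) compl_involutive)]
    refine Finset.sum_congr rfl fun T _ => ?_
    have : (∃ h : Tᶜ.Nonempty, (⟨Tᶜ, h⟩ : Atom n) ∈ circlesOf L) ↔ ¬ L ⊆ T := by
      rw [Finset.not_subset]
      constructor
      · rintro ⟨_, i, hi, hiT⟩
        exact ⟨i, hi, Finset.mem_compl.mp hiT⟩
      · rintro ⟨i, hi, hiT⟩
        exact ⟨⟨i, Finset.mem_compl.mpr hiT⟩, i, hi, Finset.mem_compl.mpr hiT⟩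
    simp only [Function.Involutive.coe_toPerm, this]
    split_ifs <;> simp_all
  have hall := key ∅
  simp only [Finset.empty_subset, if_true, f0, neg_zero] at hall
  have hsplit : (∑ T : Finset (Fin n), if L ⊆ T then 0 else atomWeight f Tᶜ)
      + (∑ T : Finset (Fin n), if L ⊆ T then atomWeight f Tᶜ else 0) = 0 := by
    refine Eq.trans ?_ hall
    rw [← Finset.sum_add_distrib]
    refine Finset.sum_congr rfl fun T _ => ?_
    split_ifs
    · exact zero_add _
    · exact add_zero _
  rw [hreindex, eq_neg_of_add_eq_zero_left hsplit, key, neg_neg]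

lemma circlesOf_union {n : ℕ} (J L : Finset (Fin n)) :
    circlesOf (J ∪ L) = circlesOf J ∪ circlesOf L := by
  ext p
  simp only [circlesOf, Set.mem_ofPred_eq, Set.mem_union, Finset.mem_union]
  grind

/-- The generalized Hu theorem (existence part): for a commutative idempotent
monoid `M` generated by `X₁,…,X_n` acting additively on an abelian group `G`
and `F₁ : M → G` satisfying the chain rule, the `G`-valued measure determined
on atoms by `μ(p_I) = ∑_{∅≠K⊇Iᶜ} (−1)^{|K|+|I|+1−n}·F₁(X_K)` satisfies
`X_J.F_q(X_{L₁};…;X_{L_q}) = μ(⋂_k X̃_{L_k} \ X̃_J)`. -/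
theorem stmt11 {M : Type u} {G : Type v} [CommMonoid M] [AddCommGroup G]
    {n : ℕ} (X : Fin n → M)
    (hidem : ∀ m : M, m * m = m)
    (hgen : ∀ m : M, ∃ I : Finset (Fin n), m = ∏ i ∈ I, X i)
    (act : M → G → G)
    (hact_one : ∀ g : G, act 1 g = g)
    (hact_mul : ∀ (a b : M) (g : G), act a (act b g) = act (a * b) g)
    (hact_add : ∀ (a : M) (g h : G), act a (g + h) = act a g + act a h)
    (F1 : M → G)
    (hchain : ∀ a b : M, F1 (a * b) = F1 a + act a (F1 b)) :
    ∃ μ : Set (Atom n) → G,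
      (∀ A B : Set (Atom n), Disjoint A B → μ (A ∪ B) = μ A + μ B) ∧
      (∀ (I : Finset (Fin n)) (hI : I.Nonempty),
        μ {(⟨I, hI⟩ : Atom n)}
          = ∑ K ∈ Finset.univ.filter
              (fun K : Finset (Fin n) => K.Nonempty ∧ Iᶜ ⊆ K),
              (-1 : ℤ) ^ (K.card + I.card + 1 - n) • F1 (∏ i ∈ K, X i)) ∧
      (∀ q : ℕ, 1 ≤ q → ∀ (L : Fin q → Finset (Fin n)) (J : Finset (Fin n)),
        act (∏ i ∈ J, X i) (Fq act F1 q fun k => ∏ i ∈ L k, X i)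
          = μ ((⋂ k, circlesOf (L k)) \ circlesOf J)) := by
  have act_sub : ∀ (a : M) (g h : G), act a (g - h) = act a g - act a h := by
    intro a g h
    rw [eq_sub_iff_add_eq, ← hact_add, sub_add_cancel]
  have prod_union : ∀ J L : Finset (Fin n),
      (∏ i ∈ J, X i) * ∏ i ∈ L, X i = ∏ i ∈ J ∪ L, X i := by
    intro J L
    -- `X_{J ∩ L}` is absorbed by `X_{J ∪ L}` thanks to idempotency.
    have hsub : J ∩ L ⊆ J ∪ L := Finset.inter_subset_left.trans Finset.subset_union_left
    rw [← Finset.prod_union_inter, ← Finset.prod_sdiff hsub, mul_assoc, hidem]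
  set f : Finset (Fin n) → G := fun K => F1 (∏ i ∈ K, X i) with hf
  have f0 : f ∅ = 0 := by
    have := hchain 1 1
    rw [mul_one, hact_one] at this
    simpa [hf] using this
  set μ : Set (Atom n) → G := atomMeasure (atomWeight f) with hμ
  have μ_union : ∀ A B : Set (Atom n), Disjoint A B → μ (A ∪ B) = μ A + μ B :=
    fun A B h => atomMeasure_union _ h
  have μ_diff : ∀ A B : Set (Atom n), μ A = μ (A ∩ B) + μ (A \ B) := by
    intro A B
    rw [← μ_union _ _ Set.disjoint_sdiff_inter.symm, Set.inter_union_sdiff]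
  refine ⟨μ, μ_union, fun I hI => atomMeasure_singleton _ I hI, ?_⟩
  intro q hq
  induction q, hq using Nat.le_induction with
  | base =>
    intro L J
    have h1 : act (∏ i ∈ J, X i) (F1 (∏ i ∈ L 0, X i)) = f (J ∪ L 0) - f J := by
      rw [eq_sub_iff_add_eq', ← hchain, prod_union]
    have h2 := μ_union (circlesOf J) (circlesOf (L 0) \ circlesOf J) Set.disjoint_sdiff_right
    rw [Set.union_sdiff_self, ← circlesOf_union, hμ, atomMeasure_circlesOf f f0,
      atomMeasure_circlesOf f f0] at h2
    have h3 : (⋂ k, circlesOf (L k)) = circlesOf (L 0) := by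
      ext p; simp [Fin.forall_fin_one]
    rw [h3]
    change act (∏ i ∈ J, X i) (F1 (∏ i ∈ L 0, X i)) = _
    rw [h1, h2, add_sub_cancel_left]
  | succ q hq ih =>
    intro L J
    obtain ⟨r, rfl⟩ : ∃ r, q = r + 1 := ⟨q - 1, by omega⟩
    have ih' := ih (fun k => L k.castSucc)
    rw [Fq, act_sub, hact_mul, prod_union, ih', ih', circlesOf_union]
    have hInter : (⋂ k, circlesOf (L k))
        = (⋂ k : Fin (r + 1), circlesOf (L k.castSucc)) ∩ circlesOf (L (Fin.last (r + 1))) := by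
      ext p
      simp only [Set.mem_iInter, Set.mem_inter_iff]
      rw [Fin.forall_fin_succ']
    rw [hInter, μ_diff (_ \ circlesOf J) (circlesOf (L (Fin.last (r + 1)))), Set.sdiff_sdiff,
      add_sub_cancel_right]
    congr 1
    ext p
    simp only [Set.mem_inter_iff, Set.mem_sdiff]
    tauto
end
end

section
/- Assume the generalized Hu theorem setting: M a commutative idempotent monoid generated by X₁,…,X_n, G an abelian group, . an additive monoid action of M on G, F₁ : M → G satisfying the chain rule, and F_q defined inductively. For nonempty I = {i₁,…,i_q} ⊆ [n] set η_I := X_{[n]∖I}.F_q(X_{i₁};…;X_{i_q}). Then for every nonempty J = {j₁,…,j_q} ⊆ [n]: F_q(X_{j₁};…;X_{j_q}) = ∑_{I : J ⊆ I ⊆ [n]} η_I. -/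
/-!
Write `X_S` for the product of the generators indexed by `S`. The chain rule turns the recursion
for `F_q` into inclusion-exclusion: on the generators indexed by a nonempty set `I`,
`F_q = H(I) := -∑_{S ⊆ I} (-1)^|S| F₁(X_S)` (`Fq_eq_altSum`). In particular `F_q` depends only on
the set `I`, not on the order of its elements, so `H(I ∪ {a}) = H(I) - X_a.H(I)` for *every*
`a ∉ I` (`altSum_insert`).

Read as `H(I) = X_a.H(I) + H(I ∪ {a})`, this identity splits `H(J)` in two for each `a ∉ J`.
Splitting repeatedly, over all elements of a set `K` disjoint from `J`, gives
`H(J) = ∑_{T ⊆ K} X_{K ∖ T}.H(J ∪ T)` (`altSum_expand`); the theorem is the case `K = Jᶜ`.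
-/

open scoped Classical

noncomputable section

universe u v

/-- The tuple `(X_{i₁},…,X_{i_q})` of the generators indexed by the elements
`i₁ < … < i_q` of `I`. -/
def tupleOf {M : Type u} {n : ℕ} (X : Fin n → M) (I : Finset (Fin n)) :
    Fin I.card → M :=
  fun k => X ((I.orderIsoOfFin rfl k : I) : Fin n)

/-- `η_I := X_{[n]∖I}.F_{|I|}(X_{i₁};…;X_{i_q})` where `I = {i₁,…,i_q}`. -/
def eta {M : Type u} {G : Type v} [CommMonoid M] [AddCommGroup G]
    {n : ℕ} (X : Fin n → M) (act : M → G → G) (F1 : M → G)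
    (I : Finset (Fin n)) : G :=
  act (∏ i ∈ Iᶜ, X i) (Fq act F1 I.card (tupleOf X I))

/-- The inclusion-exclusion expression `-∑_{S ⊆ I} (-1)^|S| F₁(X_S)`, which is the order-free form
of `F_q(X_{i₁};…;X_{i_q})` for nonempty `I = {i₁,…,i_q}`. -/
def altSum {M : Type u} {G : Type v} [CommMonoid M] [AddCommGroup G]
    {n : ℕ} (X : Fin n → M) (F1 : M → G) (I : Finset (Fin n)) : G :=
  -∑ S ∈ I.powerset, (-1 : ℤ) ^ S.card • F1 (∏ i ∈ S, X i)

/-- The recursion for `F_q` on the order-free form. It fails in general for empty `I`, where the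
alternating sum `∑_{S ⊆ I} (-1)^|S|` does not vanish. -/
theorem altSum_insert {M : Type u} {G : Type v} [CommMonoid M] [AddCommGroup G]
    {n : ℕ} (X : Fin n → M) (act : M → G → G)
    (hact_add : ∀ (a : M) (g h : G), act a (g + h) = act a g + act a h)
    (F1 : M → G)
    (hchain : ∀ a b : M, F1 (a * b) = F1 a + act a (F1 b))
    (I : Finset (Fin n)) (hI : I.Nonempty) (a : Fin n) (ha : a ∉ I) :
    altSum X F1 (insert a I) = altSum X F1 I - act (X a) (altSum X F1 I) := by
  have hact : act (X a) (altSum X F1 I)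
      = -∑ S ∈ I.powerset, (-1 : ℤ) ^ S.card • act (X a) (F1 (∏ i ∈ S, X i)) := by
    have := map_neg (AddMonoidHom.mk' (act (X a)) (hact_add (X a)))
      (∑ S ∈ I.powerset, (-1 : ℤ) ^ S.card • F1 (∏ i ∈ S, X i))
    simpa only [map_sum, map_zsmul, AddMonoidHom.mk'_apply, altSum] using this
  have hS : ∑ S ∈ I.powerset, (-1 : ℤ) ^ (insert a S).card • F1 (∏ i ∈ insert a S, X i)
      = -∑ S ∈ I.powerset, (-1 : ℤ) ^ S.card • act (X a) (F1 (∏ i ∈ S, X i)) := by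
    have h0 : ∑ S ∈ I.powerset, (-1 : ℤ) ^ S.card • F1 (X a) = 0 := by
      rw [← Finset.sum_smul, Finset.sum_powerset_neg_one_pow_card_of_nonempty hI, zero_smul]
    rw [← add_zero (∑ S ∈ I.powerset, (-1 : ℤ) ^ S.card • act (X a) (F1 (∏ i ∈ S, X i))),
      ← h0, ← Finset.sum_add_distrib, ← Finset.sum_neg_distrib]
    refine Finset.sum_congr rfl fun S hS => ?_
    have haS : a ∉ S := fun h => ha (Finset.mem_powerset.1 hS h)
    rw [Finset.card_insert_of_notMem haS, Finset.prod_insert haS, hchain, pow_succ, mul_neg_one,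
      neg_smul, smul_add, add_comm]
  rw [hact]
  unfold altSum
  rw [Finset.sum_powerset_insert ha, hS]
  abel

/-- For distinct indices, `F_q` depends only on the set of indices. -/
theorem Fq_eq_altSum {M : Type u} {G : Type v} [CommMonoid M] [AddCommGroup G]
    {n : ℕ} (X : Fin n → M) (act : M → G → G)
    (hact_one : ∀ g : G, act 1 g = g)
    (hact_add : ∀ (a : M) (g h : G), act a (g + h) = act a g + act a h)
    (F1 : M → G)
    (hchain : ∀ a b : M, F1 (a * b) = F1 a + act a (F1 b)) :
    ∀ (k : ℕ) (e : Fin k → Fin n), k ≠ 0 → Function.Injective e →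
      Fq act F1 k (fun i => X (e i)) = altSum X F1 (Finset.univ.image e)
  | 0, _, h, _ => absurd rfl h
  | 1, e, _, _ => by
    have h1 : F1 1 = 0 := by
      have := hchain 1 1
      rw [hact_one, mul_one] at this
      exact left_eq_add.1 this
    have hp : ({e 0} : Finset (Fin n)).powerset = {∅, {e 0}} := rfl
    simp [altSum, Fq, hp, h1]
  | q + 2, e, _, he => by
    have ih := Fq_eq_altSum X act hact_one hact_add F1 hchain (q + 1)
      (fun i => e i.castSucc) (by omega) (he.comp (Fin.castSucc_injective _))
    have himg : Finset.univ.image e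
        = insert (e (Fin.last (q + 1))) (Finset.univ.image fun i => e (Fin.castSucc i)) := by
      ext x
      simp only [Finset.mem_image, Finset.mem_univ, true_and, Finset.mem_insert]
      constructor
      · rintro ⟨k, rfl⟩
        induction k using Fin.lastCases with
        | last => exact Or.inl rfl
        | cast i => exact Or.inr ⟨i, rfl⟩
      · rintro (rfl | ⟨i, rfl⟩)
        exacts [⟨_, rfl⟩, ⟨_, rfl⟩]
    rw [himg, altSum_insert X act hact_add F1 hchain _ (Finset.univ_nonempty.image _), ← ih]
    · rfl
    · simp only [Finset.mem_image, Finset.mem_univ, true_and, not_exists]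
      intro i hi
      exact (Fin.castSucc_lt_last i).ne (he hi)

theorem Fq_tupleOf {M : Type u} {G : Type v} [CommMonoid M] [AddCommGroup G]
    {n : ℕ} (X : Fin n → M) (act : M → G → G)
    (hact_one : ∀ g : G, act 1 g = g)
    (hact_add : ∀ (a : M) (g h : G), act a (g + h) = act a g + act a h)
    (F1 : M → G)
    (hchain : ∀ a b : M, F1 (a * b) = F1 a + act a (F1 b))
    (I : Finset (Fin n)) (hI : I.Nonempty) :
    Fq act F1 I.card (tupleOf X I) = altSum X F1 I := by
  have h := Fq_eq_altSum X act hact_one hact_add F1 hchain I.card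
    (fun k => ((I.orderIsoOfFin rfl k : I) : Fin n)) hI.card_ne_zero
    (Subtype.val_injective.comp (I.orderIsoOfFin rfl).injective)
  have himg : (Finset.univ.image fun k => ((I.orderIsoOfFin rfl k : I) : Fin n)) = I := by
    ext x
    simp only [Finset.mem_image, Finset.mem_univ, true_and]
    constructor
    · rintro ⟨k, rfl⟩
      exact (I.orderIsoOfFin rfl k).2
    · intro hx
      exact ⟨(I.orderIsoOfFin rfl).symm ⟨x, hx⟩, by simp⟩
  rw [himg] at h
  exact h

/-- Repeated splitting `H(I) = X_a.H(I) + H(I ∪ {a})` over the elements `a` of `K`. -/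
theorem altSum_expand {M : Type u} {G : Type v} [CommMonoid M] [AddCommGroup G]
    {n : ℕ} (X : Fin n → M) (act : M → G → G)
    (hact_one : ∀ g : G, act 1 g = g)
    (hact_mul : ∀ (a b : M) (g : G), act a (act b g) = act (a * b) g)
    (hact_add : ∀ (a : M) (g h : G), act a (g + h) = act a g + act a h)
    (F1 : M → G)
    (hchain : ∀ a b : M, F1 (a * b) = F1 a + act a (F1 b))
    (J : Finset (Fin n)) (hJ : J.Nonempty) (K : Finset (Fin n)) (hK : Disjoint J K) :
    altSum X F1 J
      = ∑ T ∈ K.powerset, act (∏ i ∈ K \ T, X i) (altSum X F1 (J ∪ T)) := by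
  induction K using Finset.induction_on with
  | empty => simp [hact_one]
  | insert a K ha ih =>
    rw [Finset.disjoint_insert_right] at hK
    rw [Finset.sum_powerset_insert ha, ← Finset.sum_add_distrib, ih hK.2]
    refine Finset.sum_congr rfl fun T hT => ?_
    have haT : a ∉ T := fun h => ha (Finset.mem_powerset.1 hT h)
    have h1 : insert a K \ T = insert a (K \ T) := Finset.insert_sdiff_of_notMem _ haT
    have h2 : insert a K \ insert a T = K \ T := by
      ext x
      simp only [Finset.mem_sdiff, Finset.mem_insert]
      grind
    have ha' : a ∉ K \ T := fun h => ha (Finset.mem_sdiff.1 h).1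
    rw [h1, h2, Finset.prod_insert ha', Finset.union_insert,
      altSum_insert X act hact_add F1 hchain _ (hJ.mono Finset.subset_union_left) a
        (by simp [hK.1, haT]),
      mul_comm, ← hact_mul, ← hact_add]
    congr 1
    abel

/-- In the generalized Hu setting, for every nonempty `J = {j₁,…,j_q} ⊆ [n]`:
`F_q(X_{j₁};…;X_{j_q}) = ∑_{I ⊇ J} η_I`. -/
theorem stmt15 {M : Type u} {G : Type v} [CommMonoid M] [AddCommGroup G]
    {n : ℕ} (X : Fin n → M)
    (hidem : ∀ m : M, m * m = m)
    (hgen : ∀ m : M, ∃ I : Finset (Fin n), m = ∏ i ∈ I, X i)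
    (act : M → G → G)
    (hact_one : ∀ g : G, act 1 g = g)
    (hact_mul : ∀ (a b : M) (g : G), act a (act b g) = act (a * b) g)
    (hact_add : ∀ (a : M) (g h : G), act a (g + h) = act a g + act a h)
    (F1 : M → G)
    (hchain : ∀ a b : M, F1 (a * b) = F1 a + act a (F1 b))
    (J : Finset (Fin n)) (hJ : J.Nonempty) :
    Fq act F1 J.card (tupleOf X J)
      = ∑ I ∈ Finset.univ.filter (fun I : Finset (Fin n) => J ⊆ I),
          eta X act F1 I := by
  rw [Fq_tupleOf X act hact_one hact_add F1 hchain J hJ,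
    altSum_expand X act hact_one hact_mul hact_add F1 hchain J hJ Jᶜ disjoint_compl_right]
  -- The supersets of `J` are the sets `J ∪ T` for `T ⊆ Jᶜ`, with complement `Jᶜ \ T`.
  refine Finset.sum_bij' (fun T _ => J ∪ T) (fun I _ => I \ J) ?_ ?_ ?_ ?_ ?_
  · intro T _
    simp
  · intro I _
    simp only [Finset.mem_powerset]
    intro x hx
    simpa using (Finset.mem_sdiff.1 hx).2
  · intro T hT
    exact Finset.union_sdiff_cancel_left
      (disjoint_compl_right.mono_right (Finset.mem_powerset.1 hT))
  · intro I hI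
    exact Finset.union_sdiff_of_subset (Finset.mem_filter.1 hI).2
  · intro T _
    have hc : (J ∪ T)ᶜ = Jᶜ \ T := by
      ext x
      simp
    rw [eta, hc, Fq_tupleOf X act hact_one hact_add F1 hchain _
      (hJ.mono Finset.subset_union_left)]
end
end

section
/- Let M be a finitely generated commutative idempotent monoid, G an abelian group, . an additive monoid action of M on G, F₁ : M → G a function satisfying the chain rule, and F_q defined inductively. Let Y₁,…,Y_q, Z ∈ M be arbitrary and for K ⊆ [q] set Y_K := ∏_{k∈K} Y_k (with Y_∅ = 1). Then Z.F_q(Y₁;…;Y_q) = ∑_{K ⊆ [q]} (−1)^{|K|+1}·F₁(Y_K·Z). -/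
/-!
The proof is by induction on the number of variables. By the chain rule,
`Z.F₁(Y) = F₁(Y·Z) − F₁(Z)`, which is the formula for one variable. For the step, additivity of the
action gives `Z.F_{q+1}(Y₁;…;Y_{q+1}) = Z.F_q(Y₁;…;Y_q) − (Z·Y_{q+1}).F_q(Y₁;…;Y_q)`; applying the
formula for `q` variables to both terms yields the subsets of `[q+1]` that avoid `q+1` and,
with opposite sign, those that contain it (`sum_finset_fin_succ`).
-/

open scoped Classical

noncomputable section

universe u v

/-- Subsets of `Fin (n + 1)` are split according to whether they contain the last element. -/
theorem sum_finset_fin_succ {G : Type v} [AddCommGroup G] (n : ℕ)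
    (f : Finset (Fin (n + 1)) → G) :
    ∑ K : Finset (Fin (n + 1)), f K
      = ∑ K : Finset (Fin n), f (K.map Fin.castSuccEmb)
        + ∑ K : Finset (Fin n), f (insert (Fin.last n) (K.map Fin.castSuccEmb)) := by
  have hmap : ∀ g : Finset (Fin (n + 1)) → G,
      ∑ K ∈ ((Finset.univ : Finset (Fin n)).map Fin.castSuccEmb).powerset, g K
        = ∑ K : Finset (Fin n), g (K.map Fin.castSuccEmb) := by
    intro g
    symm
    refine Finset.sum_bij (fun K _ => K.map Fin.castSuccEmb) ?_ ?_ ?_ ?_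
    · intro K _
      exact Finset.mem_powerset.2 (Finset.map_subset_map.2 (Finset.subset_univ K))
    · intro K _ L _ h
      exact Finset.map_injective _ h
    · intro K hK
      obtain ⟨L, _, rfl⟩ := Finset.subset_map_iff.1 (Finset.mem_powerset.1 hK)
      exact ⟨L, Finset.mem_univ _, rfl⟩
    · intro K _
      rfl
  rw [← Finset.powerset_univ, Fin.univ_castSuccEmb, Finset.cons_eq_insert,
    Finset.sum_powerset_insert (by simp), hmap, hmap]

/-- Inclusion–exclusion formula for conditional interaction terms:
`Z.F_q(Y₁;…;Y_q) = ∑_{K ⊆ [q]} (−1)^{|K|+1}·F₁(Y_K·Z)` in any finitely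
generated commutative idempotent monoid acting additively on an abelian
group, with `F₁` satisfying the chain rule. -/
theorem stmt16 {M : Type u} {G : Type v} [CommMonoid M] [AddCommGroup G]
    (hidem : ∀ m : M, m * m = m)
    (hfingen : ∃ (n : ℕ) (X : Fin n → M),
      ∀ m : M, ∃ I : Finset (Fin n), m = ∏ i ∈ I, X i)
    (act : M → G → G)
    (hact_one : ∀ g : G, act 1 g = g)
    (hact_mul : ∀ (a b : M) (g : G), act a (act b g) = act (a * b) g)
    (hact_add : ∀ (a : M) (g h : G), act a (g + h) = act a g + act a h)
    (F1 : M → G)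
    (hchain : ∀ a b : M, F1 (a * b) = F1 a + act a (F1 b))
    (q : ℕ) (hq : 1 ≤ q) (Y : Fin q → M) (Z : M) :
    act Z (Fq act F1 q Y)
      = ∑ K : Finset (Fin q),
          (-1 : ℤ) ^ (K.card + 1) • F1 ((∏ k ∈ K, Y k) * Z) := by
  have hact_sub : ∀ (a : M) (g h : G), act a (g - h) = act a g - act a h := fun a =>
    map_sub (AddMonoidHom.mk' (act a) (hact_add a))
  induction q, hq using Nat.le_induction generalizing Z with
  | base =>
    have h := hchain Z (Y 0)
    rw [sum_finset_fin_succ]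
    simp [Fq, mul_comm (Y 0) Z, h, show (default : Finset (Fin 0)) = ∅ from rfl]
  | succ n hn ih =>
    -- The second equation of `Fq` applies because `n ≥ 1`.
    obtain ⟨m, rfl⟩ : ∃ m, n = m + 1 := ⟨n - 1, by omega⟩
    have hlast : ∀ K : Finset (Fin (m + 1)), Fin.last (m + 1) ∉ K.map Fin.castSuccEmb := by
      simp
    rw [Fq, hact_sub, hact_mul, ih, ih, sum_finset_fin_succ (m + 1), sub_eq_add_neg,
      ← Finset.sum_neg_distrib]
    congr 1
    · simp
    · refine Finset.sum_congr rfl fun K _ => ?_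
      rw [Finset.card_insert_of_notMem (hlast K), Finset.prod_insert (hlast K),
        Finset.card_map, Finset.prod_map, pow_succ _ (K.card + 1), mul_neg_one, neg_smul]
      congr 3
      simp only [Fin.coe_castSuccEmb]
      ac_rfl
end
end

section
/- Let M be a finitely generated commutative idempotent monoid, G an abelian group, . an additive monoid action of M on G, F₁ : M → G a function satisfying the chain rule, and F_q defined inductively. Fix p ≥ 0 and Y₁,…,Y_p, Z ∈ M and define F̃₁ : M → G by F̃₁(V) := Z.F_{p+1}(Y₁;…;Y_p;V). Then F̃₁ satisfies the chain rule F̃₁(VW) = F̃₁(V) + V.F̃₁(W) for all V, W ∈ M. -/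
/-! Write `D a g = g - a.g`. The chain rule and commutativity of `M` give
`F₁(Y) + Y.F₁(V) = F₁(YV) = F₁(V) + V.F₁(Y)`, that is, `D V (F₁ Y) = D Y (F₁ V)`.
Since the operators `D a` commute, this yields
`F_{p+1}(Y₁;…;Y_p;V) = D Y_p (⋯ (D Y₁ (F₁ V)))`: the last argument may be moved into `F₁`
(`Fq_snoc_eq`). Hence `F̃₁` is `F₁` followed by an additive endomorphism of `G` that commutes
with the action, and any such composite inherits the chain rule. -/

open scoped Classical

noncomputable section

universe u v

/-- As a function of its last argument, `F_{p+1}(Y₁;…;Y_p;·)` is `F₁` followed by an additive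
endomorphism of `G` commuting with the action, namely the composite of the `g ↦ g - Y_i.g`. -/
lemma Fq_snoc_eq {M : Type u} {G : Type v} [CommMonoid M] [AddCommGroup G]
    (act : M → G → G)
    (hact_mul : ∀ (a b : M) (g : G), act a (act b g) = act (a * b) g)
    (hact_add : ∀ (a : M) (g h : G), act a (g + h) = act a g + act a h)
    (F1 : M → G)
    (hchain : ∀ a b : M, F1 (a * b) = F1 a + act a (F1 b)) (p : ℕ) (Y : Fin p → M) :
    ∃ T : G →+ G, (∀ a g, T (act a g) = act a (T g)) ∧
      ∀ V, Fq act F1 (p + 1) (Fin.snoc Y V) = T (F1 V) := by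
  induction p with
  | zero => exact ⟨AddMonoidHom.id G, fun _ _ => rfl, fun V => rfl⟩
  | succ p ih =>
    obtain ⟨T, hT, hF⟩ := ih (Fin.init Y)
    have hY : Fq act F1 (p + 1) Y = T (F1 (Y (Fin.last p))) := by
      rw [← hF, Fin.snoc_init_self]
    have hsub : ∀ a g h, act a (g - h) = act a g - act a h := fun a =>
      map_sub (AddMonoidHom.mk' (act a) (hact_add a))
    refine ⟨T - (AddMonoidHom.mk' (act (Y (Fin.last p))) (hact_add _)).comp T, ?_, ?_⟩
    · intro a g
      simp only [AddMonoidHom.sub_apply, AddMonoidHom.comp_apply, AddMonoidHom.mk'_apply, hT,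
        hsub, hact_mul, mul_comm]
    · intro V
      have hsymm : F1 (Y (Fin.last p)) - act V (F1 (Y (Fin.last p)))
          = F1 V - act (Y (Fin.last p)) (F1 V) := by
        have h := hchain (Y (Fin.last p)) V
        rw [mul_comm, hchain] at h
        rw [sub_eq_sub_iff_add_eq_add, h]
      simp only [Fq, Fin.snoc_castSucc, Fin.snoc_last, AddMonoidHom.sub_apply,
        AddMonoidHom.comp_apply, AddMonoidHom.mk'_apply]
      rw [hY, ← hT, ← hT, ← map_sub, ← map_sub, hsymm]

/-- Relative chain rule: for fixed `Y₁,…,Y_p, Z ∈ M`, the function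
`F̃₁(V) := Z.F_{p+1}(Y₁;…;Y_p;V)` again satisfies the chain rule
`F̃₁(VW) = F̃₁(V) + V.F̃₁(W)`. -/
theorem stmt17 {M : Type u} {G : Type v} [CommMonoid M] [AddCommGroup G]
    (hidem : ∀ m : M, m * m = m)
    (hfingen : ∃ (n : ℕ) (X : Fin n → M),
      ∀ m : M, ∃ I : Finset (Fin n), m = ∏ i ∈ I, X i)
    (act : M → G → G)
    (hact_one : ∀ g : G, act 1 g = g)
    (hact_mul : ∀ (a b : M) (g : G), act a (act b g) = act (a * b) g)
    (hact_add : ∀ (a : M) (g h : G), act a (g + h) = act a g + act a h)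
    (F1 : M → G)
    (hchain : ∀ a b : M, F1 (a * b) = F1 a + act a (F1 b))
    (p : ℕ) (Y : Fin p → M) (Z : M) :
    ∀ V W : M,
      act Z (Fq act F1 (p + 1) (Fin.snoc Y (V * W)))
        = act Z (Fq act F1 (p + 1) (Fin.snoc Y V))
          + act V (act Z (Fq act F1 (p + 1) (Fin.snoc Y W))) := by
  intro V W
  obtain ⟨T, hT, hF⟩ := Fq_snoc_eq act hact_mul hact_add F1 hchain p Y
  rw [hF, hF, hF, hchain, map_add, hact_add, hT, hact_mul, hact_mul, mul_comm Z V]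
end
end
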